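/- arXiv:1209.5623 — 2 statements merged into one kernel-verified Lean document; each statement's English description precedes it below -/
import Mathlib

section
/- Let (u,P,d) be a smooth solution of the nematic liquid crystal system on ℝ³×(0,T) satisfying the Schwartz decay assumption. Then for every t ∈ (0,T), (d/dt) ½( ‖∇u(t,·)‖_{L²}² + ‖Δd(t,·)‖_{L²}² ) + ‖Δu(t,·)‖_{L²}² + ‖∇Δd(t,·)‖_{L²}² = −Σ_{i,j,k=1}^3 ∫_{ℝ³} ∂_k u_i ∂_i u_j ∂_k u_j dx − 2 Σ_{i,j=1}^3 Σ_{k=1}^3 ∫_{ℝ³} ∂_i u_j ∂_i∂_j d_k Δd_k dx + ∫_{ℝ³} Δ(|∇d|² d)·Δd dx. In particular, the two cross terms ±Σ_{i,k} ∫ ∂_i d_k Δd_k Δu_i dx arising from the momentum and director equations cancel each other. -/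
open MeasureTheory Real

noncomputable section

/-- `pd i f x` is the `i`-th partial derivative `∂ᵢ f (x)` of `f : ℝⁿ → ℝ`. -/
def pd {n : ℕ} (i : Fin n) (f : EuclideanSpace ℝ (Fin n) → ℝ)
    (x : EuclideanSpace ℝ (Fin n)) : ℝ :=
  fderiv ℝ f x (EuclideanSpace.single i 1)

/-- `lap f x` is the Laplacian `Δf(x) = Σᵢ ∂ᵢ∂ᵢ f (x)`. -/
def lap {n : ℕ} (f : EuclideanSpace ℝ (Fin n) → ℝ)
    (x : EuclideanSpace ℝ (Fin n)) : ℝ :=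
  ∑ i, pd i (fun y => pd i f y) x
/-- The simplified Ericksen–Leslie nematic liquid crystal system on ℝⁿ × (0,T). -/
structure IsNLC (n : ℕ) (T : ℝ)
    (u : ℝ → EuclideanSpace ℝ (Fin n) → EuclideanSpace ℝ (Fin n))
    (P : ℝ → EuclideanSpace ℝ (Fin n) → ℝ)
    (d : ℝ → EuclideanSpace ℝ (Fin n) → EuclideanSpace ℝ (Fin 3)) : Prop where
  smooth_u : ContDiff ℝ (⊤ : ℕ∞) (Function.uncurry u)
  smooth_P : ContDiff ℝ (⊤ : ℕ∞) (Function.uncurry P)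
  smooth_d : ContDiff ℝ (⊤ : ℕ∞) (Function.uncurry d)
  unit : ∀ t ∈ Set.Ioo (0:ℝ) T, ∀ x, ‖d t x‖ = 1
  momentum : ∀ t ∈ Set.Ioo (0:ℝ) T, ∀ x, ∀ j : Fin n,
    deriv (fun s => u s x j) t - lap (fun y => u t y j) x
      + (∑ i, u t x i * pd i (fun y => u t y j) x) + pd j (P t) x
      = - ∑ i, pd i (fun y => ∑ k : Fin 3,
          pd i (fun z => d t z k) y * pd j (fun z => d t z k) y) x
  director : ∀ t ∈ Set.Ioo (0:ℝ) T, ∀ x, ∀ k : Fin 3,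
    deriv (fun s => d s x k) t + ∑ i, u t x i * pd i (fun y => d t y k) x
      = lap (fun y => d t y k) x
        + (∑ i, ∑ k' : Fin 3, (pd i (fun y => d t y k') x) ^ 2) * d t x k
  divfree : ∀ t ∈ Set.Ioo (0:ℝ) T, ∀ x, ∑ i, pd i (fun y => u t y i) x = 0

/-- A family of functions, Schwartz in x with seminorms locally uniformly bounded in t ∈ (0,T). -/
def SchwartzFamily {n : ℕ} (T : ℝ) (f : ℝ → EuclideanSpace ℝ (Fin n) → ℝ) : Prop :=
  ∀ t₀ ∈ Set.Ioo (0:ℝ) T, ∀ k l : ℕ, ∃ ε > 0, ∃ C : ℝ,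
    ∀ t ∈ Set.Ioo (0:ℝ) T, |t - t₀| < ε →
      ∀ x, ‖x‖ ^ k * ‖iteratedFDeriv ℝ l (f t) x‖ ≤ C

/-- Schwartz decay assumption: u, ∂ₜu, ∇d, ∂ₜ∇d are Schwartz in x, locally uniformly in t. -/
def SchwartzDecay (n : ℕ) (T : ℝ)
    (u : ℝ → EuclideanSpace ℝ (Fin n) → EuclideanSpace ℝ (Fin n))
    (d : ℝ → EuclideanSpace ℝ (Fin n) → EuclideanSpace ℝ (Fin 3)) : Prop :=
  (∀ j : Fin n, SchwartzFamily T fun t x => u t x j) ∧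
  (∀ j : Fin n, SchwartzFamily T fun t x => deriv (fun s => u s x j) t) ∧
  (∀ (i : Fin n) (k : Fin 3), SchwartzFamily T fun t x => pd i (fun y => d t y k) x) ∧
  (∀ (i : Fin n) (k : Fin 3),
    SchwartzFamily T fun t x => deriv (fun s => pd i (fun y => d s y k) x) t)

abbrev E3 := EuclideanSpace ℝ (Fin 3)

/-- Smooth functions of the space variable. -/
def Sm (f : E3 → ℝ) : Prop := ContDiff ℝ (⊤ : ℕ∞) f

/-- Schwartz functions, as a predicate. -/
def Sch (f : E3 → ℝ) : Prop := ∃ g : SchwartzMap E3 ℝ, ⇑g = f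

theorem Sch.sm {f : E3 → ℝ} (h : Sch f) : Sm f := by
  obtain ⟨g, rfl⟩ := h
  exact g.smooth _

theorem Sch.integrable {f : E3 → ℝ} (h : Sch f) : Integrable f := by
  obtain ⟨g, rfl⟩ := h
  exact g.integrable

theorem Sch.add {f g : E3 → ℝ} (hf : Sch f) (hg : Sch g) : Sch (fun x => f x + g x) := by
  obtain ⟨f, rfl⟩ := hf
  obtain ⟨g, rfl⟩ := hg
  exact ⟨f + g, rfl⟩

theorem Sch.sub {f g : E3 → ℝ} (hf : Sch f) (hg : Sch g) : Sch (fun x => f x - g x) := by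
  obtain ⟨f, rfl⟩ := hf
  obtain ⟨g, rfl⟩ := hg
  exact ⟨f - g, rfl⟩

theorem Sch.mul {f g : E3 → ℝ} (hf : Sch f) (hg : Sch g) : Sch (fun x => f x * g x) := by
  obtain ⟨f, rfl⟩ := hf
  obtain ⟨g, rfl⟩ := hg
  exact ⟨SchwartzMap.pairing (ContinuousLinearMap.mul ℝ ℝ) f g, by ext x; simp⟩

theorem Sch.cmul {f : E3 → ℝ} (c : ℝ) (hf : Sch f) : Sch (fun x => c * f x) := by
  obtain ⟨f, rfl⟩ := hf
  exact ⟨c • f, rfl⟩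

theorem Sch.sq {f : E3 → ℝ} (hf : Sch f) : Sch (fun x => f x ^ 2) := by
  have := hf.mul hf
  convert this using 2
  ring

theorem Sch.zero : Sch (fun _ => 0) := ⟨0, rfl⟩

theorem Sch.sum {f : Fin 3 → E3 → ℝ} (hf : ∀ i, Sch (f i)) : Sch (fun x => ∑ i, f i x) := by
  simp only [Fin.sum_univ_three]
  exact ((hf 0).add (hf 1)).add (hf 2)

theorem Sch.pd {f : E3 → ℝ} (i : Fin 3) (hf : Sch f) : Sch (pd i f) := by
  obtain ⟨f, rfl⟩ := hf
  exact ⟨LineDeriv.lineDerivOp (EuclideanSpace.single i (1:ℝ)) f, rfl⟩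

theorem Sch.lap {f : E3 → ℝ} (hf : Sch f) : Sch (lap f) :=
  Sch.sum (f := fun i => _root_.pd i (fun y => _root_.pd i f y)) fun i => (hf.pd i).pd i

theorem Sm.diff {f : E3 → ℝ} (hf : Sm f) (x : E3) : DifferentiableAt ℝ f x :=
  (ContDiff.differentiable hf (by simp)).differentiableAt

theorem Sm.pd {f : E3 → ℝ} (i : Fin 3) (hf : Sm f) : Sm (pd i f) := by
  have h : ContDiff ℝ (⊤ : ℕ∞) (fderiv ℝ f) := ContDiff.fderiv_right hf (by simp)
  exact h.clm_apply contDiff_const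

theorem Sm.add {f g : E3 → ℝ} (hf : Sm f) (hg : Sm g) : Sm (fun x => f x + g x) :=
  ContDiff.add hf hg
theorem Sm.sub {f g : E3 → ℝ} (hf : Sm f) (hg : Sm g) : Sm (fun x => f x - g x) :=
  ContDiff.sub hf hg
theorem Sm.mul {f g : E3 → ℝ} (hf : Sm f) (hg : Sm g) : Sm (fun x => f x * g x) :=
  ContDiff.mul hf hg
theorem Sm.sum {f : Fin 3 → E3 → ℝ} (hf : ∀ i, Sm (f i)) : Sm (fun x => ∑ i, f i x) :=
  ContDiff.sum fun i _ => hf i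
theorem Sm.lap {f : E3 → ℝ} (hf : Sm f) : Sm (lap f) :=
  Sm.sum (f := fun i => _root_.pd i (fun y => _root_.pd i f y)) fun i => (hf.pd i).pd i

theorem pd_add {f g : E3 → ℝ} (i : Fin 3) (hf : Sm f) (hg : Sm g) (x : E3) :
    pd i (fun y => f y + g y) x = pd i f x + pd i g x := by
  unfold pd
  rw [fderiv_fun_add (hf.diff x) (hg.diff x)]
  rfl

theorem pd_sub {f g : E3 → ℝ} (i : Fin 3) (hf : Sm f) (hg : Sm g) (x : E3) :
    pd i (fun y => f y - g y) x = pd i f x - pd i g x := by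
  unfold pd
  rw [fderiv_fun_sub (hf.diff x) (hg.diff x)]
  rfl

theorem pd_mul {f g : E3 → ℝ} (i : Fin 3) (hf : Sm f) (hg : Sm g) (x : E3) :
    pd i (fun y => f y * g y) x = pd i f x * g x + f x * pd i g x := by
  unfold pd
  rw [fderiv_fun_mul (hf.diff x) (hg.diff x)]
  simp
  ring

theorem pd_sum {f : Fin 3 → E3 → ℝ} (i : Fin 3) (hf : ∀ j, Sm (f j)) (x : E3) :
    pd i (fun y => ∑ j, f j y) x = ∑ j, pd i (f j) x := by
  unfold pd
  rw [fderiv_fun_sum (fun j _ => (hf j).diff x)]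
  simp

theorem fderiv_comm_gen {V : Type*} [NormedAddCommGroup V] [NormedSpace ℝ V] {F : V → ℝ}
    (hF : ContDiff ℝ (⊤ : ℕ∞) F) (v w q : V) :
    fderiv ℝ (fun p => fderiv ℝ F p v) q w = fderiv ℝ (fun p => fderiv ℝ F p w) q v := by
  have h : ContDiff ℝ (⊤ : ℕ∞) (fderiv ℝ F) := hF.fderiv_right (by simp)
  have hd : DifferentiableAt ℝ (fderiv ℝ F) q := (h.differentiable (by simp)).differentiableAt
  have hs : IsSymmSndFDerivAt ℝ F q :=
    hF.contDiffAt.isSymmSndFDerivAt (by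
      rw [minSmoothness_of_isRCLikeNormedField]
      exact WithTop.coe_le_coe.2 le_top)
  rw [fderiv_clm_apply hd (differentiableAt_const _), fderiv_clm_apply hd (differentiableAt_const _)]
  simp
  exact hs w v

theorem pd_comm {f : E3 → ℝ} (hf : Sm f) (i j : Fin 3) : pd i (pd j f) = pd j (pd i f) := by
  funext x
  exact fderiv_comm_gen hf _ _ _

theorem lap_add {f g : E3 → ℝ} (hf : Sm f) (hg : Sm g) (x : E3) :
    lap (fun y => f y + g y) x = lap f x + lap g x := by
  unfold lap
  rw [← Finset.sum_add_distrib]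
  refine Finset.sum_congr rfl fun i _ => ?_
  simp only [pd_add i hf hg]
  exact pd_add i (hf.pd i) (hg.pd i) x

theorem lap_sub {f g : E3 → ℝ} (hf : Sm f) (hg : Sm g) (x : E3) :
    lap (fun y => f y - g y) x = lap f x - lap g x := by
  unfold lap
  rw [← Finset.sum_sub_distrib]
  refine Finset.sum_congr rfl fun i _ => ?_
  simp only [pd_sub i hf hg]
  exact pd_sub i (hf.pd i) (hg.pd i) x

theorem lap_sum {f : Fin 3 → E3 → ℝ} (hf : ∀ j, Sm (f j)) (x : E3) :
    lap (fun y => ∑ j, f j y) x = ∑ j, lap (f j) x := by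
  unfold lap
  rw [Finset.sum_comm]
  refine Finset.sum_congr rfl fun i _ => ?_
  simp only [pd_sum i hf]
  exact pd_sum i (fun j => (hf j).pd i) x

theorem lap_mul {f g : E3 → ℝ} (hf : Sm f) (hg : Sm g) (x : E3) :
    lap (fun y => f y * g y) x
      = lap f x * g x + 2 * (∑ j, pd j f x * pd j g x) + f x * lap g x := by
  have h : ∀ i, pd i (fun y => pd i (fun z => f z * g z) y) x
      = pd i (pd i f) x * g x + 2 * (pd i f x * pd i g x) + f x * pd i (pd i g) x := by
    intro i
    simp only [pd_mul i hf hg]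
    rw [pd_add i ((hf.pd i).mul hg) (hf.mul (hg.pd i)), pd_mul i (hf.pd i) hg,
      pd_mul i hf (hg.pd i)]
    ring
  unfold lap
  simp only [h, Fin.sum_univ_three]
  ring

theorem lap_pd {f : E3 → ℝ} (hf : Sm f) (i : Fin 3) : lap (pd i f) = pd i (lap f) := by
  funext x
  have h1 : pd i (lap f) x = ∑ j, pd i (pd j (pd j f)) x :=
    pd_sum i (f := fun j => pd j (pd j f)) (fun j => (hf.pd j).pd j) x
  rw [h1]
  show ∑ j, pd j (pd j (pd i f)) x = _
  refine Finset.sum_congr rfl fun j _ => ?_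
  rw [pd_comm hf j i, pd_comm (hf.pd j) j i]

theorem ibp {f g : E3 → ℝ} (i : Fin 3) (hf : Sch f) (hg : Sch g) :
    ∫ x, pd i f x * g x = - ∫ x, f x * pd i g x := by
  have := integral_mul_fderiv_eq_neg_fderiv_mul_of_integrable (μ := (volume : Measure E3))
    (f := f) (g := g) (v := EuclideanSpace.single i (1:ℝ))
    ((hf.pd i).mul hg).integrable (hf.mul (hg.pd i)).integrable (hf.mul hg).integrable
    (fun x _ => hf.sm.diff x) (fun x _ => hg.sm.diff x)
  show _ = - ∫ x, f x * fderiv ℝ g x _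
  rw [this, neg_neg]
  rfl

/-- Transport by a divergence free field does not contribute. -/
theorem transport {U : Fin 3 → E3 → ℝ} (hU : ∀ i, Sch (U i))
    (hdiv : ∀ x, ∑ i, pd i (U i) x = 0) {g : E3 → ℝ} (hg : Sch g) :
    ∑ i, ∫ x, U i x * pd i g x * g x = 0 := by
  have h1 : ∀ i, ∫ x, U i x * pd i g x * g x = -(1/2) * ∫ x, pd i (U i) x * (g x * g x) := by
    intro i
    rw [ibp i (hU i) (hg.mul hg)]
    simp only [pd_mul i hg.sm hg.sm]
    rw [neg_mul_neg, ← integral_const_mul]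
    congr 1
    funext x
    ring
  simp only [h1]
  rw [← Finset.mul_sum, ← integral_finsetSum _
    (fun i _ => (((hU i).pd i).mul (hg.mul hg)).integrable)]
  simp only [← Finset.sum_mul, hdiv]
  simp

theorem stepA {U Ut : E3 → ℝ} (hU : Sch U) (hUt : Sch Ut) :
    ∑ i, ∫ x, pd i U x * pd i Ut x = - ∫ x, lap U x * Ut x := by
  have h1 : ∀ i, ∫ x, pd i U x * pd i Ut x = - ∫ x, pd i (pd i U) x * Ut x := by
    intro i
    rw [ibp i (hU.pd i) hUt, neg_neg]
  simp only [h1]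
  rw [Finset.sum_neg_distrib, ← integral_finsetSum _
    (fun i _ => (((hU.pd i).pd i).mul hUt).integrable)]
  simp only [← Finset.sum_mul]
  rfl

theorem stepC {U : Fin 3 → E3 → ℝ} (hU : ∀ i, Sch (U i))
    (hdiv : ∀ x, ∑ i, pd i (U i) x = 0) {Q : E3 → ℝ} (hQ : Sm Q) (hQ' : ∀ j, Sch (pd j Q)) :
    ∑ j, ∫ x, pd j Q x * lap (U j) x = 0 := by
  have h1 : ∀ j, ∫ x, pd j Q x * lap (U j) x
      = ∑ k, ∫ x, pd k Q x * pd k (pd j (U j)) x := by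
    intro j
    have e : ∀ x, pd j Q x * lap (U j) x = ∑ k, pd j Q x * pd k (pd k (U j)) x := by
      intro x
      rw [← Finset.mul_sum]
      rfl
    simp only [e]
    rw [integral_finsetSum _
      (fun k _ => ((hQ' j).mul (((hU j).pd k).pd k)).integrable)]
    refine Finset.sum_congr rfl fun k _ => ?_
    have a1 := ibp k (hQ' j) ((hU j).pd k)
    have a2 := ibp j (hQ' k) ((hU j).pd k)
    rw [pd_comm hQ k j] at a1
    rw [pd_comm (hU j).sm j k] at a2
    linarith
  simp only [h1]
  rw [Finset.sum_comm]
  refine Finset.sum_eq_zero fun k _ => ?_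
  rw [← integral_finsetSum _ (fun j _ => ((hQ' k).mul (((hU j).pd j).pd k)).integrable)]
  have e : ∀ x, ∑ j, pd k Q x * pd k (pd j (U j)) x = 0 := by
    intro x
    rw [← Finset.mul_sum, ← pd_sum k (f := fun j => pd j (U j)) (fun j => ((hU j).pd j).sm)]
    have : (fun y => ∑ j, pd j (U j) y) = fun _ => 0 := funext hdiv
    simp only [this]
    simp [pd]
  simp only [e]
  simp

theorem stepD {U : Fin 3 → E3 → ℝ} (hU : ∀ i, Sch (U i))
    (hdiv : ∀ x, ∑ i, pd i (U i) x = 0) :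
    ∑ i, ∑ j, ∫ x, U i x * pd i (U j) x * lap (U j) x
      = -∑ i, ∑ j, ∑ k, ∫ x, pd k (U i) x * pd i (U j) x * pd k (U j) x := by
  have h1 : ∀ i j, ∫ x, U i x * pd i (U j) x * lap (U j) x
      = ∑ k, (-(∫ x, pd k (U i) x * pd i (U j) x * pd k (U j) x)
          - ∫ x, U i x * pd i (pd k (U j)) x * pd k (U j) x) := by
    intro i j
    have e : ∀ x, U i x * pd i (U j) x * lap (U j) x
        = ∑ k, U i x * pd i (U j) x * pd k (pd k (U j)) x := by
      intro x
      rw [← Finset.mul_sum]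
      rfl
    simp only [e]
    rw [integral_finsetSum _
      (fun k _ => (((hU i).mul ((hU j).pd i)).mul (((hU j).pd k).pd k)).integrable)]
    refine Finset.sum_congr rfl fun k _ => ?_
    have a1 := ibp k ((hU i).mul ((hU j).pd i)) ((hU j).pd k)
    simp only [pd_mul k (hU i).sm ((hU j).pd i).sm, pd_comm (hU j).sm k i, add_mul] at a1
    rw [integral_add ((((hU i).pd k).mul ((hU j).pd i)).mul ((hU j).pd k)).integrable
      (((hU i).mul (((hU j).pd k).pd i)).mul ((hU j).pd k)).integrable] at a1
    linarith
  have h2 : ∑ i, ∑ j, ∑ k, ∫ x, U i x * pd i (pd k (U j)) x * pd k (U j) x = 0 := by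
    rw [Finset.sum_comm]
    refine Finset.sum_eq_zero fun j _ => ?_
    rw [Finset.sum_comm]
    exact Finset.sum_eq_zero fun k _ => transport hU hdiv ((hU j).pd k)
  simp only [h1, Finset.sum_sub_distrib, Finset.sum_neg_distrib, h2, sub_zero]

theorem stepB {U : Fin 3 → E3 → ℝ} {D : Fin 3 → E3 → ℝ} {Ut Q : E3 → ℝ} (j : Fin 3)
    (hU : ∀ i, Sch (U i)) (hQ' : Sch (pd j Q)) (hD : ∀ i k, Sch (pd i (D k)))
    (hL : ∀ k, Sch (lap (D k)))
    (hm : ∀ x, Ut x = lap (U j) x - (∑ i, U i x * pd i (U j) x) - pd j Q x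
      - ∑ k, lap (D k) x * pd j (D k) x) :
    ∫ x, lap (U j) x * Ut x = (∫ x, lap (U j) x ^ 2)
      - (∑ i, ∫ x, U i x * pd i (U j) x * lap (U j) x)
      - (∫ x, pd j Q x * lap (U j) x)
      - ∑ k, ∫ x, lap (U j) x * pd j (D k) x * lap (D k) x := by
  have e : ∀ x, lap (U j) x * Ut x = lap (U j) x ^ 2
      - (∑ i, U i x * pd i (U j) x * lap (U j) x)
      - pd j Q x * lap (U j) x
      - ∑ k, lap (U j) x * pd j (D k) x * lap (D k) x := by
    intro x
    rw [hm]
    simp only [Fin.sum_univ_three]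
    ring
  have i1 := (hU j).lap.sq
  have i2 : ∀ i, Sch (fun x => U i x * pd i (U j) x * lap (U j) x) :=
    fun i => ((hU i).mul ((hU j).pd i)).mul (hU j).lap
  have i3 := hQ'.mul (hU j).lap
  have i4 : ∀ k, Sch (fun x => lap (U j) x * pd j (D k) x * lap (D k) x) :=
    fun k => ((hU j).lap.mul (hD j k)).mul (hL k)
  simp only [e]
  rw [integral_sub ((i1.sub (Sch.sum i2)).sub i3).integrable (Sch.sum i4).integrable,
    integral_sub (i1.sub (Sch.sum i2)).integrable i3.integrable,
    integral_sub i1.integrable (Sch.sum i2).integrable,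
    integral_finsetSum _ (fun i _ => (i2 i).integrable),
    integral_finsetSum _ (fun i _ => (i4 i).integrable)]

theorem stepF {L : E3 → ℝ} (hL : Sch L) :
    ∫ x, lap L x * L x = - ∑ i, ∫ x, pd i L x ^ 2 := by
  have h := stepA hL hL
  simp only [pow_two, h, neg_neg]

theorem stepE {U : Fin 3 → E3 → ℝ} {D Dt N : E3 → ℝ} (hU : ∀ i, Sch (U i))
    (hdiv : ∀ x, ∑ i, pd i (U i) x = 0) (hDs : Sm D) (hNs : Sm N) (hD : ∀ i, Sch (pd i D))
    (hDt : ∀ i, Sch (pd i Dt))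
    (hd : ∀ x, Dt x = lap D x + N x - ∑ i, U i x * pd i D x) :
    Sch (fun x => lap N x * lap D x) ∧
    ∫ x, lap D x * lap Dt x = -(∑ i, ∫ x, pd i (lap D) x ^ 2)
      + (∫ x, lap N x * lap D x)
      - (∑ i, ∫ x, lap (U i) x * pd i D x * lap D x)
      - 2 * ∑ i, ∑ j, ∫ x, pd i (U j) x * pd i (pd j D) x * lap D x := by
  have hL : Sch (lap D) := Sch.sum (f := fun i => pd i (fun y => pd i D y)) fun i => (hD i).pd i
  have hLt : Sch (lap Dt) := Sch.sum (f := fun i => pd i (fun y => pd i Dt y)) fun i => (hDt i).pd i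
  have hUD : ∀ i, Sch (fun x => U i x * pd i D x) := fun i => (hU i).mul (hD i)
  have e1 : ∀ x, lap Dt x = lap (lap D) x + lap N x - ∑ i, lap (fun y => U i y * pd i D y) x := by
    intro x
    have : Dt = fun x => lap D x + N x - ∑ i, U i x * pd i D x := funext hd
    rw [this, lap_sub (hDs.lap.add hNs) (Sch.sum hUD).sm, lap_add hDs.lap hNs,
      lap_sum (fun i => (hUD i).sm)]
  have hN : Sch (lap N) := by
    have : lap N = fun x => lap Dt x - lap (lap D) x + ∑ i, lap (fun y => U i y * pd i D y) x := by
      funext x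
      rw [e1]
      ring
    rw [this]
    exact (hLt.sub hL.lap).add (Sch.sum fun i => (hUD i).lap)
  refine ⟨hN.mul hL, ?_⟩
  have e2 : ∀ x, lap D x * lap Dt x = lap (lap D) x * lap D x + lap N x * lap D x
      - (∑ i, lap (U i) x * pd i D x * lap D x)
      - 2 * (∑ i, ∑ j, pd i (U j) x * pd i (pd j D) x * lap D x)
      - ∑ i, U i x * pd i (lap D) x * lap D x := by
    intro x
    rw [e1]
    simp only [lap_mul (hU _).sm (hDs.pd _), lap_pd hDs]
    simp only [Fin.sum_univ_three]
    ring
  have i1 := hL.lap.mul hL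
  have i2 := hN.mul hL
  have i3 : ∀ i, Sch (fun x => lap (U i) x * pd i D x * lap D x) :=
    fun i => ((hU i).lap.mul (hD i)).mul hL
  have i4 : ∀ i j, Sch (fun x => pd i (U j) x * pd i (pd j D) x * lap D x) :=
    fun i j => (((hU j).pd i).mul ((hD j).pd i)).mul hL
  have i5 : ∀ i, Sch (fun x => U i x * pd i (lap D) x * lap D x) :=
    fun i => ((hU i).mul (hL.pd i)).mul hL
  have i4' := Sch.sum fun i => Sch.sum (i4 i)
  simp only [e2]
  rw [integral_sub ((((i1.add i2).sub (Sch.sum i3)).sub (i4'.cmul 2))).integrable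
      (Sch.sum i5).integrable,
    integral_sub ((i1.add i2).sub (Sch.sum i3)).integrable (i4'.cmul 2).integrable,
    integral_sub (i1.add i2).integrable (Sch.sum i3).integrable,
    integral_add i1.integrable i2.integrable, integral_const_mul,
    integral_finsetSum _ (fun i _ => (i3 i).integrable),
    integral_finsetSum _ (fun i _ => (Sch.sum (i4 i)).integrable),
    integral_finsetSum _ (fun i _ => (i5 i).integrable), transport hU hdiv hL, stepF hL]
  simp only [integral_finsetSum _ (fun j _ => (i4 _ j).integrable), sub_zero]

theorem energy {U Ut D Dt N : Fin 3 → E3 → ℝ} {Q : E3 → ℝ} (hU : ∀ i, Sch (U i))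
    (hUt : ∀ i, Sch (Ut i))
    (hdiv : ∀ x, ∑ i, pd i (U i) x = 0) (hDs : ∀ k, Sm (D k)) (hNs : ∀ k, Sm (N k))
    (hQ : Sm Q) (hD : ∀ i k, Sch (pd i (D k)))
    (hDt : ∀ i k, Sch (pd i (Dt k)))
    (hd : ∀ k x, Dt k x = lap (D k) x + N k x - ∑ i, U i x * pd i (D k) x)
    (hm : ∀ j x, Ut j x = lap (U j) x - (∑ i, U i x * pd i (U j) x) - pd j Q x
      - ∑ k, lap (D k) x * pd j (D k) x) :
    (∑ i, ∑ j, ∫ x, pd i (U j) x * pd i (Ut j) x) + ∑ k, ∫ x, lap (D k) x * lap (Dt k) x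
      = (-(∑ i, ∑ j, ∑ k, ∫ x, pd k (U i) x * pd i (U j) x * pd k (U j) x))
          - 2 * (∑ i, ∑ j, ∑ k : Fin 3,
              ∫ x, pd i (U j) x * pd i (pd j (D k)) x * lap (D k) x)
          + (∫ x, ∑ k : Fin 3, lap (N k) x * lap (D k) x)
          - (∑ j, ∫ x, (lap (U j) x) ^ 2)
          - ∑ i, ∑ k : Fin 3, ∫ x, (pd i (lap (D k)) x) ^ 2 := by
  have hL : ∀ k, Sch (lap (D k)) := fun k =>
    Sch.sum (f := fun i => pd i (fun y => pd i (D k) y)) fun i => (hD i k).pd i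
  have hQ' : ∀ j, Sch (pd j Q) := by
    intro j
    have : pd j Q = fun x => lap (U j) x - (∑ i, U i x * pd i (U j) x)
        - (∑ k, lap (D k) x * pd j (D k) x) - Ut j x := by
      funext x
      rw [hm]
      ring
    rw [this]
    exact (((hU j).lap.sub (Sch.sum fun i => (hU i).mul ((hU j).pd i))).sub
      (Sch.sum fun k => (hL k).mul (hD j k))).sub (hUt j)
  have hE := fun k => stepE hU hdiv (hDs k) (hNs k) (fun i => hD i k) (fun i => hDt i k) (hd k)
  have hB := fun j => stepB j hU (hQ' j) hD hL (hm j)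
  have hC := stepC hU hdiv hQ hQ'
  have hDD := stepD hU hdiv
  rw [Finset.sum_comm]
  simp only [fun j => stepA (hU j) (hUt j), hB, fun k => (hE k).2]
  rw [integral_finsetSum _ (fun k _ => (hE k).1.integrable)]
  simp only [Fin.sum_univ_three] at hC hDD ⊢
  linarith

/-- Smooth functions of time and space. -/
def SmT (f : ℝ → E3 → ℝ) : Prop := ContDiff ℝ (⊤ : ℕ∞) (Function.uncurry f)

/-- Time derivative. -/
def dt (f : ℝ → E3 → ℝ) (t : ℝ) (x : E3) : ℝ := deriv (fun s => f s x) t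

theorem SmT.sm {f : ℝ → E3 → ℝ} (hf : SmT f) (t : ℝ) : Sm (f t) :=
  ContDiff.comp (g := Function.uncurry f) hf (contDiff_const.prodMk contDiff_id)

theorem SmT.smt {f : ℝ → E3 → ℝ} (hf : SmT f) (x : E3) :
    ContDiff ℝ (⊤ : ℕ∞) (fun s => f s x) :=
  ContDiff.comp (g := Function.uncurry f) hf (contDiff_id.prodMk contDiff_const)

theorem SmT.diff {f : ℝ → E3 → ℝ} (hf : SmT f) (p : ℝ × E3) :
    DifferentiableAt ℝ (Function.uncurry f) p :=
  (ContDiff.differentiable hf (by simp)).differentiableAt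

theorem pd_eq {f : ℝ → E3 → ℝ} (hf : SmT f) (i : Fin 3) (t : ℝ) (x : E3) :
    pd i (f t) x = fderiv ℝ (Function.uncurry f) (t, x) (0, EuclideanSpace.single i 1) := by
  have h1 : HasFDerivAt (fun y : E3 => (t, y)) (ContinuousLinearMap.inr ℝ ℝ E3) x :=
    hasFDerivAt_prodMk_right t x
  have h2 := (hf.diff (t, x)).hasFDerivAt.comp x h1
  have h3 : fderiv ℝ (f t) x = _ := h2.fderiv
  unfold pd
  rw [h3]
  simp

theorem dt_eq {f : ℝ → E3 → ℝ} (hf : SmT f) (t : ℝ) (x : E3) :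
    dt f t x = fderiv ℝ (Function.uncurry f) (t, x) (1, 0) := by
  have h1 : HasFDerivAt (fun s : ℝ => (s, x)) (ContinuousLinearMap.inl ℝ ℝ E3) t :=
    hasFDerivAt_prodMk_left t x
  have h2 := ((hf.diff (t, x)).hasFDerivAt.comp t h1).hasDerivAt
  have h3 : deriv (fun s => f s x) t = _ := h2.deriv
  unfold dt
  rw [h3]
  simp

theorem SmT.dir {F : ℝ × E3 → ℝ} (hF : ContDiff ℝ (⊤ : ℕ∞) F) (v : ℝ × E3) :
    ContDiff ℝ (⊤ : ℕ∞) (fun p => fderiv ℝ F p v) := by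
  have h : ContDiff ℝ (⊤ : ℕ∞) (fderiv ℝ F) := hF.fderiv_right (by simp)
  exact h.clm_apply contDiff_const

theorem uncurry_pd {f : ℝ → E3 → ℝ} (hf : SmT f) (i : Fin 3) :
    Function.uncurry (fun t => pd i (f t))
      = fun p => fderiv ℝ (Function.uncurry f) p (0, EuclideanSpace.single i 1) :=
  funext fun p => pd_eq hf i p.1 p.2

theorem uncurry_dt {f : ℝ → E3 → ℝ} (hf : SmT f) :
    Function.uncurry (dt f) = fun p => fderiv ℝ (Function.uncurry f) p (1, 0) :=
  funext fun p => dt_eq hf p.1 p.2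

theorem SmT.pd {f : ℝ → E3 → ℝ} (hf : SmT f) (i : Fin 3) : SmT (fun t => pd i (f t)) := by
  unfold SmT
  rw [uncurry_pd hf]
  exact SmT.dir hf _

theorem SmT.dt {f : ℝ → E3 → ℝ} (hf : SmT f) : SmT (dt f) := by
  unfold SmT
  rw [uncurry_dt hf]
  exact SmT.dir hf _

theorem dt_pd {f : ℝ → E3 → ℝ} (hf : SmT f) (i : Fin 3) :
    dt (fun t => pd i (f t)) = fun t => pd i (dt f t) := by
  funext t x
  rw [dt_eq (hf.pd i), pd_eq hf.dt, uncurry_pd hf, uncurry_dt hf]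
  exact fderiv_comm_gen hf _ _ _

theorem SmT.sum {f : Fin 3 → ℝ → E3 → ℝ} (hf : ∀ i, SmT (f i)) :
    SmT (fun t x => ∑ i, f i t x) :=
  ContDiff.sum (f := fun i => Function.uncurry (f i)) fun i _ => hf i

theorem dt_sum {f : Fin 3 → ℝ → E3 → ℝ} (hf : ∀ i, SmT (f i)) :
    dt (fun t x => ∑ i, f i t x) = fun t x => ∑ i, dt (f i) t x := by
  funext t x
  exact deriv_fun_sum fun i _ => (((hf i).smt x).differentiable (by simp)).differentiableAt

theorem SF.pd {T : ℝ} {f : ℝ → E3 → ℝ} (hf : SmT f) (h : SchwartzFamily T f) (i : Fin 3) :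
    SchwartzFamily T (fun t => pd i (f t)) := by
  intro t₀ ht₀ k l
  obtain ⟨ε, hε, C, hC⟩ := h t₀ ht₀ k (l + 1)
  refine ⟨ε, hε, C, fun t ht htt x => le_trans ?_ (hC t ht htt x)⟩
  refine mul_le_mul_of_nonneg_left ?_ (by positivity)
  have h1 : ContDiff ℝ (⊤ : ℕ∞) (fderiv ℝ (f t)) := ContDiff.fderiv_right (hf.sm t) (by simp)
  have h2 := norm_iteratedFDeriv_clm_apply_const (𝕜 := ℝ) (f := fderiv ℝ (f t))
    (c := EuclideanSpace.single i (1:ℝ)) (x := x) (N := ((⊤ : ℕ∞) : WithTop ℕ∞)) (n := l)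
    h1.contDiffAt (WithTop.coe_le_coe.2 le_top)
  rw [norm_iteratedFDeriv_fderiv] at h2
  have h3 : ‖EuclideanSpace.single i (1:ℝ)‖ = 1 := by simp
  rw [h3, one_mul] at h2
  exact h2

theorem SF.add {T : ℝ} {f g : ℝ → E3 → ℝ} (hf : ∀ t, Sm (f t)) (hg : ∀ t, Sm (g t))
    (h : SchwartzFamily T f) (h' : SchwartzFamily T g) :
    SchwartzFamily T (fun t x => f t x + g t x) := by
  intro t₀ ht₀ k l
  obtain ⟨ε, hε, C, hC⟩ := h t₀ ht₀ k l
  obtain ⟨ε', hε', C', hC'⟩ := h' t₀ ht₀ k l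
  refine ⟨min ε ε', lt_min hε hε', C + C', fun t ht htt x => ?_⟩
  have a := hC t ht (htt.trans_le (min_le_left _ _)) x
  have b := hC' t ht (htt.trans_le (min_le_right _ _)) x
  have e : iteratedFDeriv ℝ l (fun x => f t x + g t x) x
      = iteratedFDeriv ℝ l (f t) x + iteratedFDeriv ℝ l (g t) x := by
    exact iteratedFDeriv_add_apply
      ((ContDiff.of_le (hf t) (WithTop.coe_le_coe.2 le_top)).contDiffAt)
      ((ContDiff.of_le (hg t) (WithTop.coe_le_coe.2 le_top)).contDiffAt)
  rw [e]
  calc _ ≤ ‖x‖ ^ k * (‖iteratedFDeriv ℝ l (f t) x‖ + ‖iteratedFDeriv ℝ l (g t) x‖) :=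
        mul_le_mul_of_nonneg_left (norm_add_le _ _) (by positivity)
    _ ≤ C + C' := by rw [mul_add]; exact add_le_add a b

theorem SF.sum {T : ℝ} {f : Fin 3 → ℝ → E3 → ℝ} (hf : ∀ i t, Sm (f i t))
    (h : ∀ i, SchwartzFamily T (f i)) :
    SchwartzFamily T (fun t x => ∑ i, f i t x) := by
  simp only [Fin.sum_univ_three]
  exact SF.add (fun t => (hf 0 t).add (hf 1 t)) (hf 2)
    (SF.add (hf 0) (hf 1) (h 0) (h 1)) (h 2)

theorem SF.sch {T : ℝ} {f : ℝ → E3 → ℝ} (h : SchwartzFamily T f) {t : ℝ}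
    (ht : t ∈ Set.Ioo (0:ℝ) T) (hf : Sm (f t)) : Sch (f t) := by
  refine ⟨⟨f t, hf, fun k l => ?_⟩, rfl⟩
  obtain ⟨ε, hε, C, hC⟩ := h t ht k l
  exact ⟨C, hC t ht (by simpa using hε)⟩

theorem SF.hasDeriv {T : ℝ} {f : ℝ → E3 → ℝ} (hf : SmT f) (h : SchwartzFamily T f)
    (h' : SchwartzFamily T (dt f)) {t : ℝ} (ht : t ∈ Set.Ioo (0:ℝ) T) :
    HasDerivAt (fun s => ∫ x, f s x ^ 2) (2 * ∫ x, f t x * dt f t x) t := by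
  obtain ⟨ε₁, hε₁, C₁, h₁⟩ := h t ht 0 0
  obtain ⟨ε₂, hε₂, C₂, h₂⟩ := h' t ht 0 0
  obtain ⟨ε₃, hε₃, C₃, h₃⟩ := h' t ht 4 0
  have hs : Set.Ioo (0:ℝ) T ∩ Metric.ball t (min ε₁ (min ε₂ ε₃)) ∈ nhds t :=
    Filter.inter_mem (Ioo_mem_nhds ht.1 ht.2)
      (Metric.ball_mem_nhds _ (lt_min hε₁ (lt_min hε₂ hε₃)))
  have hint : Integrable (fun x : E3 => (2 * C₁ * (8 * (C₂ + C₃))) * (1 + ‖x‖) ^ (-(4:ℝ))) :=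
    (integrable_one_add_norm (by simp; norm_num)).const_mul _
  have key := (hasDerivAt_integral_of_dominated_loc_of_deriv_le (μ := (volume : Measure E3))
    (F := fun s x => f s x ^ 2) (F' := fun s x => 2 * (f s x * dt f s x)) hs
    (Filter.Eventually.of_forall fun s => ?_) ?_ ?_ (Filter.Eventually.of_forall fun x s hs => ?_)
    hint (Filter.Eventually.of_forall fun x s hs => ?_)).2
  · rwa [integral_const_mul] at key
  · exact ((ContDiff.continuous (hf.sm s)).pow 2).aestronglyMeasurable
  · exact (SF.sch h ht (hf.sm t)).sq.integrable
  · exact (continuous_const.mul ((ContDiff.continuous (hf.sm t)).mul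
      (ContDiff.continuous (hf.dt.sm t)))).aestronglyMeasurable
  · obtain ⟨hs1, hs2⟩ := hs
    rw [Metric.mem_ball, Real.dist_eq, lt_min_iff, lt_min_iff] at hs2
    have b1 := h₁ s hs1 hs2.1 x
    have b2 := h₂ s hs1 hs2.2.1 x
    have b3 := h₃ s hs1 hs2.2.2 x
    simp only [norm_iteratedFDeriv_zero, pow_zero, one_mul] at b1 b2 b3
    have hpos : 0 < (1 + ‖x‖) ^ 4 := by positivity
    have hp : (1 + ‖x‖) ^ 4 ≤ 8 * (1 + ‖x‖ ^ 4) := by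
      nlinarith [sq_nonneg (‖x‖ - 1), sq_nonneg (‖x‖ ^ 2 - 1), sq_nonneg (‖x‖ ^ 2 - ‖x‖),
        norm_nonneg x]
    have b4 : ‖dt f s x‖ ≤ 8 * (C₂ + C₃) * (1 + ‖x‖) ^ (-(4:ℝ)) := by
      rw [Real.rpow_neg (by positivity)]
      norm_cast
      rw [← div_eq_mul_inv, le_div_iff₀ hpos]
      calc ‖dt f s x‖ * (1 + ‖x‖) ^ 4 ≤ ‖dt f s x‖ * (8 * (1 + ‖x‖ ^ 4)) :=
            mul_le_mul_of_nonneg_left hp (norm_nonneg _)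
        _ ≤ 8 * (C₂ + C₃) := by linarith
    have : ‖2 * (f s x * dt f s x)‖ = 2 * (‖f s x‖ * ‖dt f s x‖) := by simp
    rw [this]
    have := mul_le_mul b1 b4 (norm_nonneg _) ((norm_nonneg _).trans b1)
    linarith
  · have hd : HasDerivAt (fun s => f s x) (dt f s x) s :=
      (((hf.smt x).differentiable (by simp)).differentiableAt).hasDerivAt
    refine (hd.fun_pow 2).congr_deriv ?_
    norm_num
    ring

theorem stressdiv {D : Fin 3 → E3 → ℝ} (hD : ∀ k, Sm (D k)) (j : Fin 3) (x : E3) :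
    ∑ i, pd i (fun y => ∑ k : Fin 3, pd i (D k) y * pd j (D k) y) x
      = (∑ k, lap (D k) x * pd j (D k) x)
        + pd j (fun y => ∑ i, ∑ k, (1/2) * (pd i (D k) y * pd i (D k) y)) x := by
  have hp : ∀ i k, Sm (pd i (D k)) := fun i k => (hD k).pd i
  have hc : Sm (fun _ => (1/2 : ℝ)) := contDiff_const
  have e1 : ∀ i, pd i (fun y => ∑ k : Fin 3, pd i (D k) y * pd j (D k) y) x
      = ∑ k, (pd i (pd i (D k)) x * pd j (D k) x + pd i (D k) x * pd j (pd i (D k)) x) := by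
    intro i
    rw [pd_sum i (f := fun k y => pd i (D k) y * pd j (D k) y) (fun k => (hp i k).mul (hp j k))]
    refine Finset.sum_congr rfl fun k _ => ?_
    rw [pd_mul i (hp i k) (hp j k), pd_comm (hD k) i j]
  have e2 : pd j (fun y => ∑ i, ∑ k, (1/2) * (pd i (D k) y * pd i (D k) y)) x
      = ∑ i, ∑ k, pd i (D k) x * pd j (pd i (D k)) x := by
    rw [pd_sum j (f := fun i y => ∑ k, (1/2) * (pd i (D k) y * pd i (D k) y))
      (fun i => Sm.sum fun k => hc.mul ((hp i k).mul (hp i k)))]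
    refine Finset.sum_congr rfl fun i _ => ?_
    rw [pd_sum j (f := fun k y => (1/2) * (pd i (D k) y * pd i (D k) y))
      (fun k => hc.mul ((hp i k).mul (hp i k)))]
    refine Finset.sum_congr rfl fun k _ => ?_
    rw [pd_mul j hc ((hp i k).mul (hp i k)), pd_mul j (hp i k) (hp i k)]
    have : pd j (fun _ : E3 => (1/2 : ℝ)) x = 0 := by simp [pd]
    rw [this]
    ring
  rw [e2]
  simp only [e1]
  unfold lap
  simp only [Fin.sum_univ_three]
  ring

/-- Energy identity at the H¹×H² level:
(d/dt)½(‖∇u‖² + ‖Δd‖²) + ‖Δu‖² + ‖∇Δd‖²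
  = −Σ∫∂_k uᵢ ∂ᵢu_j ∂_k u_j − 2Σ∫∂ᵢu_j ∂ᵢ∂_j d_k Δd_k + ∫Δ(|∇d|²d)·Δd. -/
theorem statement10 {T : ℝ}
    (u : ℝ → EuclideanSpace ℝ (Fin 3) → EuclideanSpace ℝ (Fin 3))
    (P : ℝ → EuclideanSpace ℝ (Fin 3) → ℝ)
    (d : ℝ → EuclideanSpace ℝ (Fin 3) → EuclideanSpace ℝ (Fin 3))
    (hsol : IsNLC 3 T u P d) (hdecay : SchwartzDecay 3 T u d) :
    ∀ t ∈ Set.Ioo (0:ℝ) T,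
      HasDerivAt (fun s => (1/2 : ℝ) *
          ((∑ i, ∑ j, ∫ x, (pd i (fun y => u s y j) x) ^ 2)
            + ∑ k : Fin 3, ∫ x, (lap (fun y => d s y k) x) ^ 2))
        ((-(∑ i, ∑ j, ∑ k, ∫ x, pd k (fun y => u t y i) x * pd i (fun y => u t y j) x
              * pd k (fun y => u t y j) x))
          - 2 * (∑ i, ∑ j, ∑ k : Fin 3,
              ∫ x, pd i (fun y => u t y j) x * pd i (pd j (fun y => d t y k)) x
                * lap (fun y => d t y k) x)
          + (∫ x, ∑ k : Fin 3,
              lap (fun y => (∑ i, ∑ k' : Fin 3, (pd i (fun z => d t z k') y) ^ 2) * d t y k) x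
                * lap (fun y => d t y k) x)
          - (∑ j, ∫ x, (lap (fun y => u t y j) x) ^ 2)
          - ∑ i, ∑ k : Fin 3, ∫ x, (pd i (lap (fun y => d t y k)) x) ^ 2) t := by
  intro t ht
  obtain ⟨hdu, hdut, hdd, hddt⟩ := hdecay
  have hu : ∀ j, SmT (fun s y => u s y j) := fun j =>
    (contDiff_euclidean.1 hsol.smooth_u) j
  have hD : ∀ k, SmT (fun s y => d s y k) := fun k =>
    (contDiff_euclidean.1 hsol.smooth_d) k
  have hPs : Sm (P t) := SmT.sm hsol.smooth_P t
  -- time derivatives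
  have h1 : ∀ i j, HasDerivAt (fun s => ∫ x, (pd i (fun y => u s y j) x) ^ 2)
      (2 * ∫ x, pd i (fun y => u t y j) x * pd i (dt (fun s y => u s y j) t) x) t := by
    intro i j
    have e := dt_pd (hu j) i
    have h := SF.hasDeriv ((hu j).pd i) (SF.pd (hu j) (hdu j) i)
      (by rw [e]; exact SF.pd (hu j).dt (hdut j) i) ht
    rw [e] at h
    exact h
  have hddt' : ∀ i k, SchwartzFamily T (fun t => pd i (dt (fun s y => d s y k) t)) := by
    intro i k
    rw [← dt_pd (hD k) i]
    exact hddt i k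
  have h2 : ∀ k, HasDerivAt (fun s => ∫ x, (lap (fun y => d s y k) x) ^ 2)
      (2 * ∫ x, lap (fun y => d t y k) x * lap (dt (fun s y => d s y k) t) x) t := by
    intro k
    have hs : ∀ i, SmT (fun s => pd i (pd i (fun y => d s y k))) :=
      fun i => ((hD k).pd i).pd i
    have e : dt (fun s x => ∑ i, pd i (pd i (fun y => d s y k)) x)
        = fun s x => ∑ i, pd i (pd i (dt (fun s y => d s y k) s)) x := by
      rw [dt_sum hs]
      funext s x
      refine Finset.sum_congr rfl fun i _ => ?_
      rw [dt_pd ((hD k).pd i) i, dt_pd (hD k) i]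
    have h := SF.hasDeriv (T := T) (SmT.sum hs)
      (SF.sum (fun i s => (hs i).sm s) (fun i => SF.pd ((hD k).pd i) (hdd i k) i))
      (by
        rw [e]
        exact SF.sum (f := fun i s => pd i (pd i (dt (fun s y => d s y k) s)))
          (fun i s => ((((hD k).dt).pd i).pd i).sm s)
          (fun i => SF.pd ((hD k).dt.pd i) (hddt' i k) i)) ht
    rw [e] at h
    exact h
  have h3 := ((HasDerivAt.fun_sum (u := Finset.univ) fun i _ =>
    HasDerivAt.fun_sum (u := Finset.univ) fun j _ => h1 i j).add
    (HasDerivAt.fun_sum (u := Finset.univ) fun k _ => h2 k)).const_mul (1/2 : ℝ)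
  have hen := energy (U := fun j y => u t y j) (Ut := fun j => dt (fun s y => u s y j) t)
    (D := fun k y => d t y k) (Dt := fun k => dt (fun s y => d s y k) t)
    (N := fun k y => (∑ i, ∑ k' : Fin 3, (pd i (fun z => d t z k') y) ^ 2) * d t y k)
    (Q := fun y => P t y + ∑ i, ∑ k : Fin 3,
      (1/2) * (pd i (fun z => d t z k) y * pd i (fun z => d t z k) y))
    (fun j => SF.sch (hdu j) ht ((hu j).sm t)) (fun j => SF.sch (hdut j) ht ((hu j).dt.sm t))
    (hsol.divfree t ht) (fun k => (hD k).sm t)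
    (fun k => (Sm.sum fun i => Sm.sum fun k' =>
      ContDiff.pow (((hD k').sm t).pd i) 2).mul ((hD k).sm t))
    (hPs.add (Sm.sum fun i => Sm.sum fun k =>
      Sm.mul (f := fun _ => 1/2) contDiff_const
        ((((hD k).sm t).pd i).mul (((hD k).sm t).pd i))))
    (fun i k => SF.sch (hdd i k) ht (((hD k).pd i).sm t))
    (fun i k => SF.sch (hddt' i k) ht (((hD k).dt.pd i).sm t))
    (fun k x => by
      have := hsol.director t ht x k
      unfold dt
      linarith)
    (fun j x => by
      have h := hsol.momentum t ht x j
      rw [stressdiv (fun k => (hD k).sm t) j x] at h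
      rw [pd_add j hPs (Sm.sum fun i => Sm.sum fun k =>
        Sm.mul (f := fun _ => 1/2) contDiff_const
          ((((hD k).sm t).pd i).mul (((hD k).sm t).pd i)))]
      unfold dt
      linarith)
  refine h3.congr_deriv ?_
  rw [← hen]
  simp only [← Finset.mul_sum]
  ring
end
end

section
/- There is a constant C, depending only on the dimension n, with the following property. Let n ≥ 2, let u : ℝⁿ → ℝⁿ be a Schwartz vector field, and let d : ℝⁿ → ℝ³ be smooth with ∇d a Schwartz function. Then | Σ_{i,j=1}^n Σ_{k=1}^3 ∫_{ℝⁿ} ∂_i u_j ∂_i∂_j d_k Δd_k dx | ≤ C ‖∇u‖_{L²} ‖∇d‖_{L^∞} ‖∇Δd‖_{L²}. -/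
open MeasureTheory Real

noncomputable section

/-- ‖∇d‖_{L^∞}: essential supremum of |∇d| for d : ℝⁿ → ℝ³. -/
def gradLinf {n : ℕ} (d : EuclideanSpace ℝ (Fin n) → EuclideanSpace ℝ (Fin 3)) : ℝ :=
  essSup (fun x => Real.sqrt (∑ i, ∑ k : Fin 3, (pd i (fun z => d z k) x) ^ 2)) volume

/-- ‖Δd‖_{L²} for d : ℝⁿ → ℝ³. -/
def lapL2 {n : ℕ} (d : EuclideanSpace ℝ (Fin n) → EuclideanSpace ℝ (Fin 3)) : ℝ :=
  Real.sqrt (∑ k : Fin 3, ∫ x, (lap (fun z => d z k) x) ^ 2)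

/-- ‖∇²d‖_{L²} for d : ℝⁿ → ℝ³. -/
def hessL2 {n : ℕ} (d : EuclideanSpace ℝ (Fin n) → EuclideanSpace ℝ (Fin 3)) : ℝ :=
  Real.sqrt (∑ i, ∑ j, ∑ k : Fin 3, ∫ x, (pd i (pd j (fun z => d z k)) x) ^ 2)

/-- ‖∇Δd‖_{L²} for d : ℝⁿ → ℝ³. -/
def gradLapL2 {n : ℕ} (d : EuclideanSpace ℝ (Fin n) → EuclideanSpace ℝ (Fin 3)) : ℝ :=
  Real.sqrt (∑ i, ∑ k : Fin 3, ∫ x, (pd i (lap (fun z => d z k)) x) ^ 2)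

/-- ‖∇u‖_{L²} for a vector field u : ℝⁿ → ℝⁿ. -/
def gradL2u {n : ℕ} (u : EuclideanSpace ℝ (Fin n) → EuclideanSpace ℝ (Fin n)) : ℝ :=
  Real.sqrt (∑ i, ∑ j, ∫ x, (pd i (fun y => u y j) x) ^ 2)

/-- ‖Δu‖_{L²} for a vector field u : ℝⁿ → ℝⁿ. -/
def lapL2u {n : ℕ} (u : EuclideanSpace ℝ (Fin n) → EuclideanSpace ℝ (Fin n)) : ℝ :=
  Real.sqrt (∑ i, ∫ x, (lap (fun y => u y i) x) ^ 2)

open scoped SchwartzMap LineDeriv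

namespace S12

abbrev Eu (n : ℕ) := EuclideanSpace ℝ (Fin n)

/-- partial derivative on Schwartz functions -/
def D {n : ℕ} (i : Fin n) (f : 𝓢(Eu n, ℝ)) : 𝓢(Eu n, ℝ) :=
  ∂_{(EuclideanSpace.single i (1 : ℝ) : Eu n)} f

/-- product of Schwartz functions -/
def mul {n : ℕ} (f g : 𝓢(Eu n, ℝ)) : 𝓢(Eu n, ℝ) :=
  SchwartzMap.pairing (ContinuousLinearMap.mul ℝ ℝ) f g

lemma mul_apply {n : ℕ} (f g : 𝓢(Eu n, ℝ)) (x : Eu n) : mul f g x = f x * g x := rfl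

lemma D_apply {n : ℕ} (i : Fin n) (f : 𝓢(Eu n, ℝ)) (x : Eu n) : D i f x = pd i f x := rfl

lemma D_coe {n : ℕ} (i : Fin n) (f : 𝓢(Eu n, ℝ)) : (D i f : Eu n → ℝ) = pd i f := rfl

lemma int2 {n : ℕ} (f g : 𝓢(Eu n, ℝ)) : Integrable (fun x => f x * g x) :=
  (mul f g).integrable

lemma D_mul {n : ℕ} (i : Fin n) (f g : 𝓢(Eu n, ℝ)) (x : Eu n) :
    D i (mul f g) x = f x * D i g x + D i f x * g x := by
  have h := (f.hasFDerivAt x).mul (g.hasFDerivAt x)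
  have h2 : HasFDerivAt (mul f g) _ x := h
  rw [D_apply, pd, h2.fderiv]
  simp [D_apply, pd, mul_comm]

lemma ibp {n : ℕ} (i : Fin n) (f g : 𝓢(Eu n, ℝ)) :
    ∫ x, f x * D i g x = -∫ x, D i f x * g x :=
  SchwartzMap.integral_mul_lineDerivOp_right_eq_neg_left f g _

lemma pd_comm {n : ℕ} (i j : Fin n) (f : Eu n → ℝ) (hf : ContDiff ℝ 2 f) (x : Eu n) :
    pd i (pd j f) x = pd j (pd i f) x := by
  have hd : DifferentiableAt ℝ (fderiv ℝ f) x :=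
    ((hf.fderiv_right (m := 1) (by norm_num)).differentiable (by norm_num)) x
  have key : ∀ v w : Eu n, fderiv ℝ (fun y => fderiv ℝ f y v) x w
      = fderiv ℝ (fderiv ℝ f) x w v := by
    intro v w
    have := (hd.hasFDerivAt.clm_apply (hasFDerivAt_const v x)).fderiv
    rw [this]; simp
  have hs := (hf.contDiffAt (x := x)).isSymmSndFDerivAt (by simp)
  change fderiv ℝ (fun y => fderiv ℝ f y _) x _ = fderiv ℝ (fun y => fderiv ℝ f y _) x _
  rw [key, key]
  exact hs.eq _ _

lemma D_comm {n : ℕ} (i j : Fin n) (f : 𝓢(Eu n, ℝ)) : D i (D j f) = D j (D i f) := by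
  ext x
  exact pd_comm i j f (f.smooth 2) x

lemma CS {n : ℕ} (f g : 𝓢(Eu n, ℝ)) :
    (∫ x, f x * g x) ^ 2 ≤ (∫ x, f x * f x) * ∫ x, g x * g x := by
  have h : ∀ t : ℝ, 0 ≤ (∫ x, f x * f x) * (t * t) + (2 * ∫ x, f x * g x) * t
      + ∫ x, g x * g x := by
    intro t
    have h0 : 0 ≤ ∫ x, (f x * t + g x) ^ 2 := integral_nonneg fun x => sq_nonneg _
    have e : ∫ x, (f x * t + g x) ^ 2
        = ∫ x, ((f x * f x) * (t * t) + (f x * g x) * (2 * t) + g x * g x) := by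
      congr 1; ext x; ring
    have i1 : Integrable fun x => (f x * f x) * (t * t) + (f x * g x) * (2 * t) :=
      ((int2 f f).mul_const _).add ((int2 f g).mul_const _)
    rw [e, integral_add i1 (int2 g g),
      integral_add ((int2 f f).mul_const _) ((int2 f g).mul_const _),
      integral_mul_const, integral_mul_const] at h0
    linarith
  have := discrim_le_zero h
  rw [discrim] at this
  nlinarith

lemma interp {n : ℕ} (i : Fin n) (g : 𝓢(Eu n, ℝ)) (M : ℝ) (hM : ∀ x, |g x| ≤ M) :
    ∫ x, mul (D i g) (D i g) x * mul (D i g) (D i g) x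
      ≤ 9 * M ^ 2 * ∫ x, D i (D i g) x * D i (D i g) x := by
  set b := D i g with hb
  set c := D i b with hc
  set B := ∫ x, mul b b x * mul b b x with hB
  have h1 : B = -(3 * ∫ x, mul b b x * mul g c x) := by
    have := ibp i (mul b (mul b b)) g
    rw [← hb] at this
    have e1 : B = ∫ x, mul b (mul b b) x * b x := by
      rw [hB]; congr 1; ext x; simp only [mul_apply]; ring
    rw [e1, this, ← integral_const_mul]
    congr 2; ext x
    simp only [D_mul, mul_apply, ← hc]; ring
  have h2 := CS (mul b b) (mul g c)
  have h3 : ∫ x, mul g c x * mul g c x ≤ M ^ 2 * ∫ x, c x * c x := by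
    rw [← integral_const_mul]
    refine integral_mono (int2 _ _) ((int2 c c).const_mul _) fun x => ?_
    simp only [mul_apply]
    have : g x ^ 2 ≤ M ^ 2 := sq_le_sq' (by linarith [neg_abs_le (g x), hM x]) ((le_abs_self _).trans (hM x))
    nlinarith [mul_le_mul_of_nonneg_right this (sq_nonneg (c x))]
  have hB0 : 0 ≤ B := integral_nonneg fun x => mul_self_nonneg _
  have hc0 : 0 ≤ ∫ x, c x * c x := integral_nonneg fun x => mul_self_nonneg _
  rcases hB0.eq_or_lt with h | h
  · rw [← h]; positivity
  · have h4 : B * B ≤ B * (9 * M ^ 2 * ∫ x, c x * c x) := by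
      have := mul_le_mul_of_nonneg_left h3 hB0
      calc B * B = 9 * (∫ x, mul b b x * mul g c x) ^ 2 := by rw [h1]; ring
        _ ≤ _ := by nlinarith
    exact le_of_mul_le_mul_left h4 h

lemma hess {n : ℕ} (i : Fin n) (g : 𝓢(Eu n, ℝ)) :
    ∫ x, D i (D i g) x * D i (D i g) x ≤ ∫ x, (∑ l, D l (D l g) x) ^ 2 := by
  have e : ∫ x, (∑ l, D l (D l g) x) ^ 2
      = ∑ l, ∑ m, ∫ x, D l (D m g) x * D l (D m g) x := by
    simp only [sq, Finset.sum_mul_sum]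
    rw [integral_finsetSum _ fun l _ => integrable_finsetSum _ fun m _ => int2 _ _]
    refine Finset.sum_congr rfl fun l _ => ?_
    rw [integral_finsetSum _ fun m _ => int2 _ _]
    refine Finset.sum_congr rfl fun m _ => ?_
    rw [ibp m, D_comm m l, D_comm m l]
    have := ibp l (D l (D m g)) (D m g)
    have e2 := ibp l (D m (D l g)) (D m g)
    rw [D_comm m l g] at e2
    rw [e2, D_comm l m g]
  rw [e]
  have h0 : ∀ l m, 0 ≤ ∫ x, D l (D m g) x * D l (D m g) x :=
    fun l m => integral_nonneg fun x => mul_self_nonneg _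
  calc _ ≤ ∑ m, ∫ x, D i (D m g) x * D i (D m g) x :=
        Finset.single_le_sum (f := fun m => ∫ x, D i (D m g) x * D i (D m g) x)
          (fun m _ => h0 i m) (Finset.mem_univ i)
    _ ≤ _ := Finset.single_le_sum (f := fun l => ∑ m, ∫ x, D l (D m g) x * D l (D m g) x)
          (fun l _ => Finset.sum_nonneg fun m _ => h0 l m) (Finset.mem_univ i)

lemma triple {n : ℕ} (a b c : 𝓢(Eu n, ℝ)) (A K : ℝ) (hA : 0 ≤ A) (hK : 0 ≤ K)
    (ha : ∫ x, a x * a x ≤ A ^ 2)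
    (hb : ∫ x, mul b b x * mul b b x ≤ K ^ 4) (hc : ∫ x, mul c c x * mul c c x ≤ K ^ 4) :
    |∫ x, a x * mul b c x| ≤ A * K ^ 2 := by
  have h1 := CS a (mul b c)
  have h2 := CS (mul b b) (mul c c)
  have e : ∫ x, mul b b x * mul c c x = ∫ x, mul b c x * mul b c x := by
    congr 1; ext x; simp only [mul_apply]; ring
  rw [e] at h2
  have n1 : 0 ≤ ∫ x, mul b c x * mul b c x := integral_nonneg fun x => mul_self_nonneg _
  have n2 : 0 ≤ ∫ x, mul c c x * mul c c x := integral_nonneg fun x => mul_self_nonneg _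
  have h3 : ∫ x, mul b c x * mul b c x ≤ K ^ 4 := by
    refine (pow_le_pow_iff_left₀ n1 (by positivity) two_ne_zero).1 ?_
    calc _ ≤ _ := h2
      _ ≤ K ^ 4 * K ^ 4 := mul_le_mul hb hc n2 (by positivity)
      _ = _ := by ring
  refine abs_le_of_sq_le_sq ?_ (by positivity)
  calc _ ≤ _ := h1
    _ ≤ A ^ 2 * K ^ 4 := mul_le_mul ha h3 n1 (by positivity)
    _ = _ := by ring

lemma le_of_ae {n : ℕ} (f : Eu n → ℝ) (hf : Continuous f) (c : ℝ)
    (h : ∀ᵐ x, f x ≤ c) (x : Eu n) : f x ≤ c := by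
  have : (fun x => max (f x) c) =ᵐ[volume] fun _ => c := by
    filter_upwards [h] with x hx using max_eq_right hx
  have h2 := (Continuous.ae_eq_iff_eq volume (hf.max continuous_const) continuous_const).1 this
  have := congrFun h2 x
  exact max_eq_right_iff.1 this

end S12

open S12 in
/-- |Σ ∫ ∂ᵢu_j ∂ᵢ∂_j d_k Δd_k| ≤ C ‖∇u‖_{L²} ‖∇d‖_{L^∞} ‖∇Δd‖_{L²},
with C depending only on n. -/
theorem statement12 (n : ℕ) (hn : 2 ≤ n) :
    ∃ C : ℝ, ∀ (u : SchwartzMap (EuclideanSpace ℝ (Fin n)) (EuclideanSpace ℝ (Fin n)))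
      (d : EuclideanSpace ℝ (Fin n) → EuclideanSpace ℝ (Fin 3)),
      ContDiff ℝ (⊤ : ℕ∞) d →
      (∀ (i : Fin n) (k : Fin 3),
        ∃ g : SchwartzMap (EuclideanSpace ℝ (Fin n)) ℝ,
          ∀ x, g x = pd i (fun z => d z k) x) →
      |∑ i, ∑ j, ∑ k : Fin 3,
          ∫ x, pd i (fun y => u y j) x * pd i (pd j (fun z => d z k)) x
            * lap (fun z => d z k) x|
        ≤ C * (gradL2u (fun y => u y) * gradLinf d * gradLapL2 d) := by
  refine ⟨9 * (n : ℝ) ^ 3, ?_⟩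
  intro u d hd hg
  choose g hg using hg
  have hgf : ∀ i k, pd i (fun z => d z k) = g i k := fun i k => (funext (hg i k)).symm
  -- components of u as Schwartz functions
  obtain ⟨v, hv⟩ : ∃ v : Fin n → 𝓢(Eu n, ℝ), ∀ j, (fun y => u y j) = v j :=
    ⟨fun j => SchwartzMap.postcompCLM (𝕜 := ℝ) (EuclideanSpace.proj (𝕜 := ℝ) j) u,
      fun j => rfl⟩
  have hdk : ∀ k, ContDiff ℝ 2 (fun z => d z k) := by
    intro k
    have h : ContDiff ℝ 2 d := contDiff_infty.1 hd 2
    exact (EuclideanSpace.proj (𝕜 := ℝ) k).contDiff.comp h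
  have hsymm : ∀ i j k, D i (g j k) = D j (g i k) := by
    intro i j k
    ext x
    rw [D_apply, D_apply, ← hgf, ← hgf]
    exact pd_comm i j _ (hdk k) x
  have hlap : ∀ k, lap (fun z => d z k) = fun x => ∑ l, D l (g l k) x := by
    intro k; ext x
    unfold lap
    refine Finset.sum_congr rfl fun l _ => ?_
    rw [D_apply, ← hgf]
  have hplap : ∀ i k x, pd i (lap (fun z => d z k)) x = ∑ l, D l (D l (g i k)) x := by
    intro i k x
    rw [hlap, pd, fderiv_fun_sum fun l _ => (D l (g l k)).differentiableAt]
    rw [sum_apply]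
    refine Finset.sum_congr rfl fun l _ => ?_
    rw [← hsymm i l k, D_comm l i]
    rfl
  set M := gradLinf d with hMdef
  set N := gradLapL2 d with hNdef
  set A := gradL2u (fun y => u y) with hAdef
  have hM : ∀ i k x, |g i k x| ≤ M := by
    have hcont : Continuous (fun x => Real.sqrt (∑ i, ∑ k : Fin 3, (pd i (fun z => d z k) x) ^ 2)) := by
      simp only [hgf]
      refine Real.continuous_sqrt.comp ?_
      exact continuous_finsetSum _ fun i _ => continuous_finsetSum _ fun k _ =>
        ((g i k).continuous.pow 2)
    have hbdd : ∀ i k, ∃ c, ∀ x, |g i k x| ≤ c := fun i k =>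
      ⟨_, fun x => by simpa using (g i k).norm_le_seminorm ℝ x⟩
    choose c hc using hbdd
    have hbd : Filter.IsBoundedUnder (· ≤ ·) (ae (volume : Measure (Eu n)))
        (fun x => Real.sqrt (∑ i, ∑ k : Fin 3, (pd i (fun z => d z k) x) ^ 2)) := by
      refine Filter.isBoundedUnder_of ⟨Real.sqrt (∑ i, ∑ k : Fin 3, (c i k) ^ 2), fun x => ?_⟩
      simp only [hgf]
      refine Real.sqrt_le_sqrt (Finset.sum_le_sum fun i _ => Finset.sum_le_sum fun k _ => ?_)
      exact sq_le_sq' (by linarith [neg_abs_le (g i k x), hc i k x])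
        ((le_abs_self _).trans (hc i k x))
    have hle := le_of_ae _ hcont _ (ae_le_essSup hbd)
    intro i k x
    refine le_trans ?_ (hle x)
    refine Real.abs_le_sqrt ?_
    simp only [hgf]
    calc _ ≤ ∑ k, g i k x ^ 2 := Finset.single_le_sum (f := fun k => g i k x ^ 2)
          (fun k _ => sq_nonneg _) (Finset.mem_univ k)
      _ ≤ _ := Finset.single_le_sum (f := fun i => ∑ k, g i k x ^ 2)
          (fun i _ => Finset.sum_nonneg fun k _ => sq_nonneg _) (Finset.mem_univ i)
  have hN0 : 0 ≤ N := Real.sqrt_nonneg _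
  have hA0 : 0 ≤ A := Real.sqrt_nonneg _
  have hM0 : 0 ≤ M := (abs_nonneg _).trans (hM ⟨0, by omega⟩ 0 0)
  have hN : ∀ i k, ∫ x, (∑ l, D l (D l (g i k)) x) ^ 2 ≤ N ^ 2 := by
    intro i k
    have h0 : ∀ i k, 0 ≤ ∫ x, (pd i (lap (fun z => d z k)) x) ^ 2 :=
      fun i k => integral_nonneg fun x => sq_nonneg _
    rw [hNdef, gradLapL2, Real.sq_sqrt (Finset.sum_nonneg fun i _ =>
      Finset.sum_nonneg fun k _ => h0 i k)]
    simp only [← hplap]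
    calc _ ≤ ∑ k : Fin 3, ∫ x, (pd i (lap (fun z => d z k)) x) ^ 2 :=
          Finset.single_le_sum (f := fun k : Fin 3 => ∫ x, (pd i (lap (fun z => d z k)) x) ^ 2)
          (fun k _ => h0 i k) (Finset.mem_univ k)
      _ ≤ _ := Finset.single_le_sum
          (f := fun i => ∑ k : Fin 3, ∫ x, (pd i (lap (fun z => d z k)) x) ^ 2)
          (fun i _ => Finset.sum_nonneg fun k _ => h0 i k) (Finset.mem_univ i)
  have hA : ∀ i j, ∫ x, D i (v j) x * D i (v j) x ≤ A ^ 2 := by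
    intro i j
    have h0 : ∀ i j, 0 ≤ ∫ x, (pd i (fun y => u y j) x) ^ 2 :=
      fun i k => integral_nonneg fun x => sq_nonneg _
    rw [hAdef, gradL2u, Real.sq_sqrt (Finset.sum_nonneg fun i _ =>
      Finset.sum_nonneg fun k _ => h0 i k)]
    have e : ∫ x, D i (v j) x * D i (v j) x = ∫ x, (pd i (fun y => u y j) x) ^ 2 := by
      simp only [hv, D_apply, sq]
    rw [e]
    calc _ ≤ ∑ j, ∫ x, (pd i (fun y => u y j) x) ^ 2 :=
          Finset.single_le_sum (f := fun j => ∫ x, (pd i (fun y => u y j) x) ^ 2)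
          (fun k _ => h0 i k) (Finset.mem_univ j)
      _ ≤ _ := Finset.single_le_sum
          (f := fun i => ∑ j, ∫ x, (pd i (fun y => u y j) x) ^ 2)
          (fun i _ => Finset.sum_nonneg fun k _ => h0 i k) (Finset.mem_univ i)
  set K := Real.sqrt (3 * M * N) with hK
  have hK2 : K ^ 2 = 3 * M * N := Real.sq_sqrt (by positivity)
  have hB : ∀ i j k, ∫ x, mul (D i (g j k)) (D i (g j k)) x * mul (D i (g j k)) (D i (g j k)) x
      ≤ K ^ 4 := by
    intro i j k
    have h1 := interp i (g j k) M (hM j k)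
    have h2 := (hess i (g j k)).trans (hN j k)
    calc _ ≤ _ := h1
      _ ≤ 9 * M ^ 2 * N ^ 2 := mul_le_mul_of_nonneg_left h2 (by positivity)
      _ = (K ^ 2) ^ 2 := by rw [hK2]; ring
      _ = K ^ 4 := by ring
  have hterm : ∀ i j (k : Fin 3), |∫ x, pd i (fun y => u y j) x * pd i (pd j (fun z => d z k)) x
            * lap (fun z => d z k) x| ≤ n * (A * K ^ 2) := by
    intro i j k
    have e : ∫ x, pd i (fun y => u y j) x * pd i (pd j (fun z => d z k)) x
            * lap (fun z => d z k) x
        = ∑ l, ∫ x, D i (v j) x * mul (D i (g j k)) (D l (g l k)) x := by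
      rw [← integral_finsetSum _ fun l _ => int2 _ _]
      congr 1; ext x
      rw [hv, hgf, hlap, Finset.mul_sum]
      refine Finset.sum_congr rfl fun l _ => ?_
      rw [mul_apply, ← mul_assoc]; rfl
    rw [e]
    calc _ ≤ ∑ l, |∫ x, D i (v j) x * mul (D i (g j k)) (D l (g l k)) x| :=
          Finset.abs_sum_le_sum_abs _ _
      _ ≤ ∑ l : Fin n, A * K ^ 2 := Finset.sum_le_sum fun l _ =>
          triple _ _ _ A K hA0 (Real.sqrt_nonneg _) (hA i j) (hB i j k) (hB l l k)
      _ = _ := by simp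
  calc _ ≤ ∑ i : Fin n, ∑ j : Fin n, ∑ k : Fin 3, (n * (A * K ^ 2) : ℝ) := by
        refine (Finset.abs_sum_le_sum_abs _ _).trans (Finset.sum_le_sum fun i _ => ?_)
        refine (Finset.abs_sum_le_sum_abs _ _).trans (Finset.sum_le_sum fun j _ => ?_)
        exact (Finset.abs_sum_le_sum_abs _ _).trans (Finset.sum_le_sum fun k _ => hterm i j k)
    _ = 9 * (n : ℝ) ^ 3 * (A * M * N) := by
        rw [hK2]; simp; ring
end
end
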